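/- If σ : ℝ → ℝ is expressive, then σ is 1-strongly correlating: for every fixed k ∈ ℕ, INAL(M_k, σ) = Ω(n^{-(k+1)}) as n → ∞, where M_k(x) = ∏_{i=1}^k x_i is viewed as a Boolean function on {±1}^n for every n ≥ k. -/

import Mathlib

open MeasureTheory ProbabilityTheory Filter Finset Asymptotics
open scoped NNReal ENNReal

noncomputable section

/-- The ±1 value encoded by a Boolean bit. -/
def bsign (b : Bool) : ℝ := if b then 1 else -1

/-- Expectation over a uniformly random point of the Boolean cube `{±1}^n`. -/
def bExp (n : ℕ) (g : (Fin n → Bool) → ℝ) : ℝ :=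
  (∑ x : Fin n → Bool, g x) / 2 ^ n

/-- A function on the Boolean cube is Boolean(-valued) if it takes values in `{±1}`. -/
def IsBooleanFn {n : ℕ} (f : (Fin n → Bool) → ℝ) : Prop := ∀ x, f x = 1 ∨ f x = -1

/-- Initialization distribution: the weights `w : ℝⁿ` and the bias `b` are
iid `N(0, 1/n)` Gaussians. -/
def initMeasure (n : ℕ) : Measure ((Fin n → ℝ) × ℝ) :=
  (Measure.pi fun _ : Fin n => gaussianReal 0 (n : ℝ≥0)⁻¹).prod (gaussianReal 0 (n : ℝ≥0)⁻¹)

/-- Initial alignment `INAL(f, σ) = E_{w,b} [ (E_x [f(x) σ(wᵀx + b)])² ]`. -/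
def INAL (n : ℕ) (f : (Fin n → Bool) → ℝ) (σ : ℝ → ℝ) : ℝ :=
  ∫ θ : (Fin n → ℝ) × ℝ,
    (bExp n fun x => f x * σ (∑ i, θ.1 i * bsign (x i) + θ.2)) ^ 2 ∂ initMeasure n

/-- The `v`-Gaussian smoothing `Σ_v(t) = E_{Y ∼ N(0,v)} [σ(Y + t)]`. -/
def gsmooth (σ : ℝ → ℝ) (v : ℝ) (t : ℝ) : ℝ :=
  ∫ y, σ (y + t) ∂ gaussianReal 0 v.toNNReal

/-- `σ` is polynomially bounded: `|σ(x)| ≤ C |x|^c + C` for some `C, c > 0`. -/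
def PolyBounded (σ : ℝ → ℝ) : Prop :=
  ∃ C : ℝ, 0 < C ∧ ∃ c : ℕ, 0 < c ∧ ∀ x : ℝ, |σ x| ≤ C * |x| ^ c + C

/-- `σ` is expressive: measurable, polynomially bounded, and its Gaussian smoothing has no
two consecutive vanishing derivatives at `0`. -/
def Expressive (σ : ℝ → ℝ) : Prop :=
  Measurable σ ∧ PolyBounded σ ∧
    ∀ m : ℕ, iteratedDeriv m (gsmooth σ 1) 0 ≠ 0 ∨ iteratedDeriv (m + 1) (gsmooth σ 1) 0 ≠ 0

/-- A nonnegative sequence is negligible if it decays faster than any inverse polynomial. -/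
def Negligible (g : ℕ → ℝ) : Prop :=
  ∀ c : ℕ, Tendsto (fun n : ℕ => (n : ℝ) ^ c * g n) atTop (nhds 0)

/-- Fourier character `M_S(x) = ∏_{i ∈ S} x_i`. -/
def chi {n : ℕ} (S : Finset (Fin n)) (x : Fin n → Bool) : ℝ := ∏ i ∈ S, bsign (x i)

/-- Fourier coefficient `f̂(S) = E_x [f(x) M_S(x)]`. -/
def fourierCoef (n : ℕ) (f : (Fin n → Bool) → ℝ) (S : Finset (Fin n)) : ℝ :=
  bExp n fun x => f x * chi S x

/-- Fourier weight up to degree `k`: `W^{≤k}(f)`. -/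
def weightLE (n k : ℕ) (f : (Fin n → Bool) → ℝ) : ℝ :=
  ∑ S ∈ Finset.univ.filter (fun S : Finset (Fin n) => S.card ≤ k), fourierCoef n f S ^ 2

/-- Fourier weight strictly below degree `k`: `W^{<k}(f)`. -/
def weightLT (n k : ℕ) (f : (Fin n → Bool) → ℝ) : ℝ :=
  ∑ S ∈ Finset.univ.filter (fun S : Finset (Fin n) => S.card < k), fourierCoef n f S ^ 2

/-- The monomial `M_k(x) = ∏_{i=1}^k x_i`, viewed as a function on `{±1}^n`. -/
def monomial (n k : ℕ) : (Fin n → Bool) → ℝ :=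
  fun x => ∏ i ∈ Finset.univ.filter (fun i : Fin n => (i : ℕ) < k), bsign (x i)

/-- The `N`-extension of `f : {±1}^n → ℝ` (for `n ≤ N`): ignore the last `N - n` coordinates. -/
def extendFn (n N : ℕ) (f : (Fin n → Bool) → ℝ) : (Fin N → Bool) → ℝ :=
  fun x => f fun i => if h : (i : ℕ) < N then x ⟨i, h⟩ else false

/-- Cross-predictability of (the uniform distribution on) the orbit of `f` under coordinate
permutations, with uniform inputs: `CP(orb(f), U^N)`. -/
def orbitCP (N : ℕ) (f : (Fin N → Bool) → ℝ) : ℝ :=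
  (∑ π : Equiv.Perm (Fin N), ∑ π' : Equiv.Perm (Fin N),
      (bExp N fun x => f (fun i => x (π i)) * f (fun i => x (π' i))) ^ 2) /
    (Fintype.card (Equiv.Perm (Fin N))) ^ 2

/-- `N = n^{1+ε}` (rounded up). -/
def Ndim (ε : ℝ) (n : ℕ) : ℕ := ⌈(n : ℝ) ^ (1 + ε)⌉₊

/-!
Cauchy–Schwarz in `L²(w, b)` bounds `INAL(f, σ)` from below by the squared correlation of
`θ ↦ E_x [f(x) σ(wᵀx + b)]` with any normalised function of `θ = (w, b)`; test it against
`b^e ∏_{i ∈ S} w_i` with `e ∈ {0, 1}`. The law of `w` is invariant under `w_i ↦ w_i x_i`, which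
replaces `wᵀx` by `∑ w_i` and produces the character `M_S(x)`, so the correlation is
`f̂(S) · E[b^e ∏_{i ∈ S} w_i · σ(∑ w_i + b)]`. Integrating by parts in each of the `|S| + e`
Gaussian variables turns the expectation into `n^{-(|S| + e)} Σ_{1 + 1/n}^{(|S| + e)}(0)`, while the
test function has norm squared `n^{-(|S| + e)}`. Hence
`INAL(M_k, σ) ≥ n^{-(k + e)} (Σ_{1 + 1/n}^{(k + e)}(0))²`, whose last factor tends to
`(Σ^{(k + e)}(0))²`; this is nonzero for `e = 0` or for `e = 1`.
-/

/-! ### Random variables with finite moments -/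

/-- Finiteness of all absolute moments of `f` under `μ`: the integrability class closed under
products and under composition with functions of polynomial growth. -/
def HasAllMoments {Ω : Type*} [MeasurableSpace Ω] (f : Ω → ℝ) (μ : Measure Ω) : Prop :=
  ∀ p : ℕ, MemLp f p μ

/-- The regularity demanded of an expressive activation: measurable with polynomial growth. -/
structure MeasurablePolyBounded (φ : ℝ → ℝ) : Prop where
  measurable : Measurable φ
  polyBounded : PolyBounded φ

theorem polyBounded_iff_exists_le_mul_one_add_abs_pow {φ : ℝ → ℝ} :
    PolyBounded φ ↔ ∃ (C : ℝ) (c : ℕ), ∀ x, |φ x| ≤ C * (1 + |x|) ^ c := by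
  constructor
  · rintro ⟨C, hC, c, -, hφ⟩
    refine ⟨2 * C, c, fun x => (hφ x).trans ?_⟩
    have hpow : |x| ^ c ≤ (1 + |x|) ^ c := by gcongr; linarith
    have hone : 1 ≤ (1 + |x|) ^ c := one_le_pow₀ (by linarith [abs_nonneg x])
    nlinarith
  · rintro ⟨C, c, hφ⟩
    refine ⟨(|C| + 1) * 2 ^ c, by positivity, c + 1, c.succ_pos, fun x => ?_⟩
    calc |φ x| ≤ C * (1 + |x|) ^ c := hφ x
      _ ≤ (|C| + 1) * (1 + |x|) ^ (c + 1) := by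
        gcongr
        · linarith [le_abs_self C]
        · linarith [abs_nonneg x]
        · exact c.le_succ
      _ ≤ (|C| + 1) * (2 ^ c * (1 ^ (c + 1) + |x| ^ (c + 1))) := by
        gcongr
        exact add_pow_le zero_le_one (abs_nonneg x) (c + 1)
      _ = (|C| + 1) * 2 ^ c * |x| ^ (c + 1) + (|C| + 1) * 2 ^ c := by ring

theorem one_add_abs_add_le_mul (x y : ℝ) : 1 + |x + y| ≤ (1 + |x|) * (1 + |y|) := by
  nlinarith [abs_add_le x y, mul_nonneg (abs_nonneg x) (abs_nonneg y)]

theorem PolyBounded.exists_abs_add_le {φ : ℝ → ℝ} (hφ : PolyBounded φ) :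
    ∃ (C : ℝ) (c : ℕ), 0 ≤ C ∧ ∀ x t, |φ (x + t)| ≤ C * (1 + |x|) ^ c * (1 + |t|) ^ c := by
  obtain ⟨C, c, hC⟩ := polyBounded_iff_exists_le_mul_one_add_abs_pow.1 hφ
  have hC₀ : 0 ≤ C := (abs_nonneg _).trans (by simpa using hC 0)
  refine ⟨C, c, hC₀, fun x t => ?_⟩
  calc |φ (x + t)| ≤ C * (1 + |x + t|) ^ c := hC _
    _ ≤ C * ((1 + |x|) * (1 + |t|)) ^ c := by gcongr; exact one_add_abs_add_le_mul x t
    _ = C * (1 + |x|) ^ c * (1 + |t|) ^ c := by rw [mul_pow, mul_assoc]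

namespace HasAllMoments

variable {Ω : Type*} [MeasurableSpace Ω] {μ : Measure Ω} {f g : Ω → ℝ}

theorem integrable (hf : HasAllMoments f μ) : Integrable f μ :=
  memLp_one_iff_integrable.1 (by simpa using hf 1)

theorem memLp_two (hf : HasAllMoments f μ) : MemLp f 2 μ := by simpa using hf 2

theorem abs (hf : HasAllMoments f μ) : HasAllMoments (fun ω => |f ω|) μ :=
  fun p => (hf p).abs

theorem add (hf : HasAllMoments f μ) (hg : HasAllMoments g μ) :
    HasAllMoments (fun ω => f ω + g ω) μ :=
  fun p => (hf p).add (hg p)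

theorem mul (hf : HasAllMoments f μ) (hg : HasAllMoments g μ) :
    HasAllMoments (fun ω => f ω * g ω) μ := by
  intro p
  have : ENNReal.HolderTriple ((2 * p : ℕ) : ℝ≥0∞) ((2 * p : ℕ) : ℝ≥0∞) (p : ℝ≥0∞) := by
    constructor
    push_cast
    rw [ENNReal.mul_inv (by simp) (by simp), ← add_mul, ENNReal.inv_two_add_inv_two, one_mul]
  exact (hg (2 * p)).mul' (hf (2 * p))

theorem comp_measurePreserving {Ω' : Type*} [MeasurableSpace Ω'] {ν : Measure Ω'}
    (hf : HasAllMoments f μ) {T : Ω' → Ω} (hT : MeasurePreserving T ν μ) :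
    HasAllMoments (fun ω => f (T ω)) ν :=
  fun p => (hf p).comp_measurePreserving hT

theorem finset_sum {ι : Type*} {s : Finset ι} {f : ι → Ω → ℝ}
    (hf : ∀ i ∈ s, HasAllMoments (f i) μ) : HasAllMoments (fun ω => ∑ i ∈ s, f i ω) μ :=
  fun p => memLp_finsetSum s fun i hi => hf i hi p

variable [IsFiniteMeasure μ]

theorem const (a : ℝ) : HasAllMoments (fun _ => a) μ :=
  fun _ => memLp_const a

theorem pow (hf : HasAllMoments f μ) (m : ℕ) : HasAllMoments (fun ω => f ω ^ m) μ := by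
  induction m with
  | zero => simpa using const 1
  | succ m ih => simpa [pow_succ] using ih.mul hf

theorem one_add_abs_pow (hf : HasAllMoments f μ) (m : ℕ) :
    HasAllMoments (fun ω => (1 + |f ω|) ^ m) μ :=
  ((const 1).add hf.abs).pow m

theorem comp {φ : ℝ → ℝ} (hφ : MeasurablePolyBounded φ) (hf : HasAllMoments f μ) :
    HasAllMoments (fun ω => φ (f ω)) μ := by
  obtain ⟨C, c, hC⟩ := polyBounded_iff_exists_le_mul_one_add_abs_pow.1 hφ.polyBounded
  intro p
  refine (((const C).mul (hf.one_add_abs_pow c)) p).mono' ?_ (ae_of_all _ fun ω => hC (f ω))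
  exact (hφ.measurable.comp_aemeasurable (hf 0).1.aemeasurable).aestronglyMeasurable

theorem comp_add_const {φ : ℝ → ℝ} (hφ : MeasurablePolyBounded φ) (hf : HasAllMoments f μ)
    (t : ℝ) : HasAllMoments (fun ω => φ (f ω + t)) μ :=
  (hf.add (const t)).comp hφ

end HasAllMoments

theorem hasAllMoments_gaussianReal (m : ℝ) (v : ℝ≥0) :
    HasAllMoments (fun y => y) (gaussianReal m v) :=
  fun p => memLp_id_gaussianReal' p (by simp)

theorem polyBounded_integral_mul_comp_add {Ω : Type*} [MeasurableSpace Ω] {μ : Measure Ω}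
    [IsFiniteMeasure μ] {G X : Ω → ℝ} {φ : ℝ → ℝ} (hG : HasAllMoments G μ)
    (hX : HasAllMoments X μ) (hφ : PolyBounded φ) :
    PolyBounded fun t => ∫ ω, G ω * φ (X ω + t) ∂μ := by
  obtain ⟨C, c, -, hC⟩ := hφ.exists_abs_add_le
  rw [polyBounded_iff_exists_le_mul_one_add_abs_pow]
  refine ⟨∫ ω, |G ω| * (C * (1 + |X ω|) ^ c) ∂μ, c, fun t => ?_⟩
  have hdom : Integrable (fun ω => |G ω| * (C * (1 + |X ω|) ^ c)) μ :=
    (hG.abs.mul ((HasAllMoments.const C).mul (hX.one_add_abs_pow c))).integrable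
  rw [← integral_mul_const, ← Real.norm_eq_abs]
  refine norm_integral_le_of_norm_le (hdom.mul_const _) (ae_of_all _ fun ω => ?_)
  rw [norm_mul, mul_assoc]
  exact mul_le_mul_of_nonneg_left (hC _ t) (abs_nonneg _)

theorem sq_integral_mul_le_integral_sq_mul_integral_sq {Ω : Type*} [MeasurableSpace Ω]
    {μ : Measure Ω} {f g : Ω → ℝ} (hf : MemLp f 2 μ) (hg : MemLp g 2 μ) :
    (∫ ω, f ω * g ω ∂μ) ^ 2 ≤ (∫ ω, f ω ^ 2 ∂μ) * ∫ ω, g ω ^ 2 ∂μ := by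
  have inner_toLp {f g : Ω → ℝ} (hf : MemLp f 2 μ) (hg : MemLp g 2 μ) :
      inner ℝ (hf.toLp f) (hg.toLp g) = ∫ ω, f ω * g ω ∂μ := by
    rw [L2.inner_def]
    refine integral_congr_ae ?_
    filter_upwards [hf.coeFn_toLp, hg.coeFn_toLp] with ω hfω hgω
    simp [hfω, hgω, mul_comm]
  simpa only [inner_toLp, ← sq] using real_inner_mul_inner_self_le (hf.toLp f) (hg.toLp g)

/-! ### Gaussian smoothing -/

theorem hasDerivAt_gaussianPDFReal_mean (v : ℝ≥0) (u t : ℝ) :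
    HasDerivAt (fun t => gaussianPDFReal t v u) ((u - t) / v * gaussianPDFReal t v u) t := by
  have hexponent : HasDerivAt (fun t => -(u - t) ^ 2 / (2 * v)) ((u - t) / v) t := by
    refine ((((hasDerivAt_id t).const_sub u).pow 2).neg.div_const (2 * (v : ℝ))).congr_deriv ?_
    simp [mul_div_mul_left]
  exact (hexponent.exp.const_mul _).congr_deriv (by rw [gaussianPDFReal]; ring)

theorem gaussianPDFReal_le_mul_gaussianPDFReal_two_mul (v : ℝ≥0) (s t u : ℝ) :
    gaussianPDFReal t v u ≤
      √2 * Real.exp ((t - s) ^ 2 / (2 * v)) * gaussianPDFReal s (2 * v) u := by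
  have hexponent : -(u - t) ^ 2 / (2 * v) ≤
      (t - s) ^ 2 / (2 * v) + -(u - s) ^ 2 / (2 * (2 * v : ℝ≥0)) := by
    have hsplit : (t - s) ^ 2 / (2 * v) + -(u - s) ^ 2 / (2 * (2 * v : ℝ≥0)) =
        ((t - s) ^ 2 - (u - s) ^ 2 / 2) / (2 * v) := by
      push_cast
      ring
    rw [hsplit]
    gcongr
    nlinarith [sq_nonneg (u - s - 2 * (t - s))]
  have hconst : (√(2 * Real.pi * v))⁻¹ = √2 * (√(2 * Real.pi * (2 * v : ℝ≥0)))⁻¹ := by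
    rw [show 2 * Real.pi * (2 * v : ℝ≥0) = 2 * (2 * Real.pi * v) by push_cast; ring,
      Real.sqrt_mul zero_le_two, mul_inv, mul_inv_cancel_left₀ (by positivity)]
  calc gaussianPDFReal t v u
      ≤ (√(2 * Real.pi * v))⁻¹ *
          Real.exp ((t - s) ^ 2 / (2 * v) + -(u - s) ^ 2 / (2 * (2 * v : ℝ≥0))) := by
        rw [gaussianPDFReal]
        gcongr
    _ = √2 * Real.exp ((t - s) ^ 2 / (2 * v)) * gaussianPDFReal s (2 * v) u := by
        rw [gaussianPDFReal, Real.exp_add, hconst]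
        ring

theorem integrable_gaussianPDFReal_mul {m : ℝ} {v : ℝ≥0} (hv : v ≠ 0) {f : ℝ → ℝ}
    (hf : Integrable f (gaussianReal m v)) :
    Integrable fun u => gaussianPDFReal m v u * f u := by
  rw [gaussianReal_of_var_ne_zero _ hv, integrable_withDensity_iff_integrable_smul'
    (measurable_gaussianPDF _ _) (ae_of_all _ fun _ => gaussianPDF_lt_top)] at hf
  simpa using hf

theorem integral_comp_add_gaussianReal (v : ℝ≥0) (t : ℝ) (g : ℝ → ℝ) :
    ∫ y, g (y + t) ∂gaussianReal 0 v = ∫ u, g u ∂gaussianReal t v := by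
  rw [← (measurableEmbedding_addRight t).integral_map, gaussianReal_map_add_const, zero_add]

theorem abs_deriv_gaussianPDFReal_mean_le (v : ℝ≥0) {s t : ℝ} (hst : |t - s| ≤ 1) (u : ℝ) :
    |(u - t) / v * gaussianPDFReal t v u| ≤
      (1 + |u - s|) / v * (√2 * Real.exp (1 / (2 * v)) * gaussianPDFReal s (2 * v) u) := by
  have hdev : |u - t| ≤ 1 + |u - s| := by
    linarith [abs_sub_le u s t, abs_sub_comm s t]
  have hdensity : gaussianPDFReal t v u ≤
      √2 * Real.exp (1 / (2 * v)) * gaussianPDFReal s (2 * v) u := by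
    refine (gaussianPDFReal_le_mul_gaussianPDFReal_two_mul v s t u).trans ?_
    have := gaussianPDFReal_nonneg s (2 * v) u
    have : (t - s) ^ 2 ≤ 1 := (sq_le_one_iff_abs_le_one _).2 hst
    gcongr
  rw [abs_mul, abs_div, NNReal.abs_eq, abs_of_nonneg (gaussianPDFReal_nonneg t v u)]
  exact mul_le_mul (by gcongr) hdensity (gaussianPDFReal_nonneg t v u) (by positivity)

theorem gsmooth_apply (φ : ℝ → ℝ) (v : ℝ≥0) (t : ℝ) :
    gsmooth φ v t = ∫ y, φ (y + t) ∂gaussianReal 0 v := by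
  rw [gsmooth, Real.toNNReal_coe]

theorem gsmooth_zero (φ : ℝ → ℝ) : gsmooth φ 0 = φ := by
  ext t
  simp [gsmooth]

section Smoothing

variable {φ : ℝ → ℝ} {v : ℝ≥0}

theorem gsmooth_eq_integral_gaussianPDFReal_mul (hv : v ≠ 0) (t : ℝ) :
    gsmooth φ v t = ∫ u, gaussianPDFReal t v u * φ u := by
  rw [gsmooth_apply, integral_comp_add_gaussianReal, integral_gaussianReal_eq_integral_smul hv]
  rfl

theorem integral_mul_comp_add_gaussianReal_eq (hv : v ≠ 0) (t : ℝ) :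
    (∫ y, y * φ (y + t) ∂gaussianReal 0 v) / v =
      ∫ u, (u - t) / v * gaussianPDFReal t v u * φ u := by
  have hshift := integral_comp_add_gaussianReal v t fun u => (u - t) * φ u
  simp only [add_sub_cancel_right] at hshift
  rw [hshift, integral_gaussianReal_eq_integral_smul hv, ← integral_div]
  congr 1 with u
  rw [smul_eq_mul]
  ring

/-- Only the Gaussian density is differentiated, so `φ` need not be differentiable. -/
theorem hasDerivAt_gsmooth (hφ : MeasurablePolyBounded φ) (hv : v ≠ 0) (t₀ : ℝ) :
    HasDerivAt (gsmooth φ v) ((∫ y, y * φ (y + t₀) ∂gaussianReal 0 v) / v) t₀ := by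
  have hid := hasAllMoments_gaussianReal t₀ (2 * v)
  have hdev : HasAllMoments (fun u => |u - t₀|) (gaussianReal t₀ (2 * v)) :=
    (hid.add (.const (-t₀))).abs
  have hdom : Integrable fun u => gaussianPDFReal t₀ (2 * v) u *
      (√2 * Real.exp (1 / (2 * v)) / v * ((1 + |u - t₀|) * |φ u|)) :=
    integrable_gaussianPDFReal_mul (mul_ne_zero two_ne_zero hv) ((HasAllMoments.const _).mul
      (((HasAllMoments.const 1).add hdev).mul (hid.comp hφ).abs)).integrable
  have hφmeas := hφ.measurable
  have hmeas (t : ℝ) := measurable_gaussianPDFReal t v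
  rw [funext (gsmooth_eq_integral_gaussianPDFReal_mul hv),
    integral_mul_comp_add_gaussianReal_eq hv]
  refine (hasDerivAt_integral_of_dominated_loc_of_deriv_le
    (F' := fun t u => (u - t) / v * gaussianPDFReal t v u * φ u)
    (Metric.ball_mem_nhds t₀ one_pos)
    (.of_forall fun t => ((hmeas t).mul hφmeas).aestronglyMeasurable)
    (integrable_gaussianPDFReal_mul hv ((hasAllMoments_gaussianReal t₀ v).comp hφ).integrable)
    ?_ (ae_of_all _ fun u t ht => ?_) hdom
    (ae_of_all _ fun u t _ => (hasDerivAt_gaussianPDFReal_mean v u t).mul_const (φ u))).2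
  · have := hmeas t₀
    exact Measurable.aestronglyMeasurable (by fun_prop)
  · rw [norm_mul]
    calc ‖(u - t) / v * gaussianPDFReal t v u‖ * ‖φ u‖
        ≤ (1 + |u - t₀|) / v *
            (√2 * Real.exp (1 / (2 * v)) * gaussianPDFReal t₀ (2 * v) u) * |φ u| := by
          refine mul_le_mul_of_nonneg_right ?_ (abs_nonneg _)
          exact abs_deriv_gaussianPDFReal_mean_le v (Metric.mem_ball.1 ht).le u
      _ = _ := by ring

theorem integral_mul_comp_add_gaussianReal (hφ : MeasurablePolyBounded φ) (hv : v ≠ 0) (t : ℝ) :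
    ∫ y, y * φ (y + t) ∂gaussianReal 0 v = v * deriv (gsmooth φ v) t := by
  rw [(hasDerivAt_gsmooth hφ hv t).deriv, mul_div_cancel₀ _ (NNReal.coe_ne_zero.2 hv)]

theorem measurablePolyBounded_gsmooth (hφ : MeasurablePolyBounded φ) (v : ℝ≥0) :
    MeasurablePolyBounded (gsmooth φ v) := by
  rw [funext (gsmooth_apply φ v)]
  constructor
  · have hjoint : Measurable fun p : ℝ × ℝ => φ (p.2 + p.1) :=
      hφ.measurable.comp (measurable_snd.add measurable_fst)
    exact hjoint.stronglyMeasurable.integral_prod_right.measurable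
  · simpa using polyBounded_integral_mul_comp_add (.const 1)
      (hasAllMoments_gaussianReal 0 v) hφ.polyBounded

theorem measurablePolyBounded_deriv_gsmooth (hφ : MeasurablePolyBounded φ) (hv : v ≠ 0) :
    MeasurablePolyBounded (deriv (gsmooth φ v)) := by
  refine ⟨measurable_deriv _, ?_⟩
  have hderiv : deriv (gsmooth φ v) = fun t => ∫ y, y / v * φ (y + t) ∂gaussianReal 0 v := by
    ext t
    rw [(hasDerivAt_gsmooth hφ hv t).deriv, ← integral_div]
    simp only [mul_div_right_comm]
  have hid := hasAllMoments_gaussianReal 0 v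
  rw [hderiv]
  exact polyBounded_integral_mul_comp_add (hid.mul (.const _)) hid hφ.polyBounded

theorem gsmooth_gsmooth (hφ : MeasurablePolyBounded φ) (v s : ℝ≥0) :
    gsmooth (gsmooth φ v) s = gsmooth φ ↑(v + s) := by
  ext t
  have hconv := gaussianReal_conv_gaussianReal (m₁ := 0) (m₂ := 0) (v₁ := s) (v₂ := v)
  rw [add_zero, add_comm s v] at hconv
  simp only [gsmooth_apply]
  rw [← hconv, integral_conv]
  · simp only [add_assoc, add_left_comm]
  · rw [hconv]
    exact ((hasAllMoments_gaussianReal 0 (v + s)).comp_add_const hφ t).integrable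

/-- Smoothing commutes with differentiation by Fubini, since both are integrals of `φ` against
Gaussian weights. -/
theorem gsmooth_deriv_gsmooth (hφ : MeasurablePolyBounded φ) (hv : v ≠ 0) (s : ℝ≥0) :
    gsmooth (deriv (gsmooth φ v)) s = deriv (gsmooth φ ↑(v + s)) := by
  have hfst := (hasAllMoments_gaussianReal 0 s).comp_measurePreserving
    (measurePreserving_fst (ν := gaussianReal 0 v))
  have hsnd := (hasAllMoments_gaussianReal 0 v).comp_measurePreserving
    (measurePreserving_snd (μ := gaussianReal 0 s))
  ext t
  have hint : Integrable (fun p : ℝ × ℝ => p.2 * φ (p.1 + p.2 + t) / v)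
      ((gaussianReal 0 s).prod (gaussianReal 0 v)) :=
    (hsnd.mul ((hfst.add hsnd).comp_add_const hφ t)).integrable.div_const _
  calc gsmooth (deriv (gsmooth φ v)) s t
      = ∫ x, ∫ y, y * φ (x + y + t) / v ∂gaussianReal 0 v ∂gaussianReal 0 s := by
        simp only [gsmooth_apply, (hasDerivAt_gsmooth hφ hv _).deriv, integral_div, add_assoc,
          add_left_comm]
    _ = ∫ y, ∫ x, y * φ (x + y + t) / v ∂gaussianReal 0 s ∂gaussianReal 0 v :=
        integral_integral_swap hint
    _ = deriv (gsmooth (gsmooth φ s) v) t := by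
        rw [(hasDerivAt_gsmooth (measurablePolyBounded_gsmooth hφ s) hv t).deriv]
        simp only [gsmooth_apply, integral_div, integral_const_mul, add_assoc]
    _ = deriv (gsmooth φ ↑(v + s)) t := by rw [gsmooth_gsmooth hφ, add_comm]

theorem iteratedDeriv_succ_gsmooth_add (hφ : MeasurablePolyBounded φ) (hv : v ≠ 0) (s : ℝ≥0)
    (j : ℕ) : iteratedDeriv (j + 1) (gsmooth φ ↑(v + s)) =
      iteratedDeriv j (gsmooth (deriv (gsmooth φ v)) s) := by
  rw [iteratedDeriv_succ', gsmooth_deriv_gsmooth hφ hv]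

/-- Half of the variance is left to absorb the remaining derivatives, so inductions on the order
only ever differentiate the Gaussian density once. -/
theorem iteratedDeriv_succ_gsmooth (hφ : MeasurablePolyBounded φ) (hv : v ≠ 0) (j : ℕ) :
    iteratedDeriv (j + 1) (gsmooth φ v) =
      iteratedDeriv j (gsmooth (deriv (gsmooth φ ↑(v / 2))) ↑(v / 2)) := by
  rw [← iteratedDeriv_succ_gsmooth_add hφ (div_ne_zero hv two_ne_zero), add_halves]

theorem measurablePolyBounded_iteratedDeriv_gsmooth (hφ : MeasurablePolyBounded φ) (hv : v ≠ 0)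
    (j : ℕ) : MeasurablePolyBounded (iteratedDeriv j (gsmooth φ v)) := by
  induction j generalizing φ v with
  | zero => simpa using measurablePolyBounded_gsmooth hφ v
  | succ j ih =>
    have hv' := div_ne_zero hv two_ne_zero
    rw [iteratedDeriv_succ_gsmooth hφ hv]
    exact ih (measurablePolyBounded_deriv_gsmooth hφ hv') hv'

theorem continuous_iteratedDeriv_gsmooth (hφ : MeasurablePolyBounded φ) (hv : v ≠ 0) (j : ℕ) :
    Continuous (iteratedDeriv j (gsmooth φ v)) := by
  induction j generalizing φ v with
  | zero =>
    rw [iteratedDeriv_zero]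
    exact continuous_iff_continuousAt.2 fun t => (hasDerivAt_gsmooth hφ hv t).continuousAt
  | succ j ih =>
    have hv' := div_ne_zero hv two_ne_zero
    rw [iteratedDeriv_succ_gsmooth hφ hv]
    exact ih (measurablePolyBounded_deriv_gsmooth hφ hv') hv'

theorem gsmooth_iteratedDeriv_gsmooth (hφ : MeasurablePolyBounded φ) (hv : v ≠ 0) (s : ℝ≥0)
    (j : ℕ) : gsmooth (iteratedDeriv j (gsmooth φ v)) s = iteratedDeriv j (gsmooth φ ↑(v + s)) := by
  induction j generalizing φ v with
  | zero => simpa using gsmooth_gsmooth hφ v s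
  | succ j ih =>
    have hv' := div_ne_zero hv two_ne_zero
    rw [iteratedDeriv_succ_gsmooth hφ hv, ih (measurablePolyBounded_deriv_gsmooth hφ hv') hv',
      ← iteratedDeriv_succ_gsmooth_add hφ hv', ← add_assoc, add_halves]

theorem gsmooth_eq_integral_sqrt_mul (hφ : Measurable φ) (s : ℝ≥0) (t : ℝ) :
    gsmooth φ s t = ∫ y, φ (√s * y + t) ∂gaussianReal 0 1 := by
  have hscale := gaussianReal_map_const_mul (μ := 0) (v := 1) (√s)
  have hvar : NNReal.mk (√(s : ℝ) ^ 2) (sq_nonneg _) * 1 = s := by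
    ext
    simp
  rw [mul_zero, hvar] at hscale
  rw [gsmooth_apply, ← hscale, integral_map (by fun_prop)]
  exact (hφ.comp (measurable_add_const t)).aestronglyMeasurable

theorem tendsto_gsmooth_nhds_zero (hφ : MeasurablePolyBounded φ) {t : ℝ}
    (hcont : ContinuousAt φ t) :
    Tendsto (fun s : ℝ≥0 => gsmooth φ s t) (nhds 0) (nhds (φ t)) := by
  obtain ⟨C, c, hC₀, hC⟩ := hφ.polyBounded.exists_abs_add_le
  have hdom : Integrable (fun y : ℝ => C * (1 + |y|) ^ c * (1 + |t|) ^ c) (gaussianReal 0 1) :=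
    ((HasAllMoments.const C).mul
      ((hasAllMoments_gaussianReal 0 1).one_add_abs_pow c)).integrable.mul_const _
  have hlim : φ t = ∫ _, φ t ∂gaussianReal 0 1 := by simp
  simp only [gsmooth_eq_integral_sqrt_mul hφ.measurable]
  rw [hlim]
  refine tendsto_integral_filter_of_dominated_convergence _ (.of_forall fun s => ?_) ?_ hdom
    (ae_of_all _ fun y => ?_)
  · exact (hφ.measurable.comp (by fun_prop)).aestronglyMeasurable
  · filter_upwards [Iic_mem_nhds one_pos] with s hs
    refine ae_of_all _ fun y => (hC _ t).trans ?_
    have hsqrt : √(s : ℝ) ≤ 1 := Real.sqrt_le_one.2 (by exact_mod_cast hs)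
    have hscaled : |√(s : ℝ) * y| ≤ |y| := by
      rw [abs_mul, abs_of_nonneg (Real.sqrt_nonneg _)]
      exact mul_le_of_le_one_left (abs_nonneg y) hsqrt
    gcongr
  · refine hcont.tendsto.comp ?_
    have : Continuous fun s : ℝ≥0 => √(s : ℝ) * y + t := by fun_prop
    simpa using this.tendsto 0

theorem tendsto_iteratedDeriv_gsmooth_add (hφ : MeasurablePolyBounded φ) (hv : v ≠ 0) (j : ℕ)
    (t : ℝ) :
    Tendsto (fun s : ℝ≥0 => iteratedDeriv j (gsmooth φ ↑(v + s)) t) (nhds 0)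
      (nhds (iteratedDeriv j (gsmooth φ v) t)) := by
  simp only [← gsmooth_iteratedDeriv_gsmooth hφ hv]
  exact tendsto_gsmooth_nhds_zero (measurablePolyBounded_iteratedDeriv_gsmooth hφ hv j)
    (continuous_iteratedDeriv_gsmooth hφ hv j).continuousAt

end Smoothing


/-! ### Gaussian integration by parts of higher order -/

/-- Stein's identity `E[G φ(X + t)] = a · ∂ʲ (Σ_v φ)(t)` of order `j`, for all `φ` of polynomial
growth. A centred Gaussian of variance `v` satisfies it with `X = G = y`, `a = v`, `j = 1`, and the
parameters combine under independence: see `SteinIdentity.prod`. -/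
structure SteinIdentity {Ω : Type*} [MeasurableSpace Ω] (μ : Measure Ω) (G X : Ω → ℝ) (a : ℝ)
    (j : ℕ) (v : ℝ≥0) : Prop where
  weight_moments : HasAllMoments G μ
  moments : HasAllMoments X μ
  integral_eq : ∀ {φ : ℝ → ℝ}, MeasurablePolyBounded φ → ∀ t : ℝ,
    ∫ ω, G ω * φ (X ω + t) ∂μ = a * iteratedDeriv j (gsmooth φ v) t

theorem steinIdentity_gaussianReal {v : ℝ≥0} (hv : v ≠ 0) {e : ℕ} (he : e ≤ 1) :
    SteinIdentity (gaussianReal 0 v) (fun y => y ^ e) (fun y => y) (v ^ e) e v where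
  weight_moments := (hasAllMoments_gaussianReal 0 v).pow e
  moments := hasAllMoments_gaussianReal 0 v
  integral_eq {φ} hφ t := by
    interval_cases e
    · simp [gsmooth_apply]
    · simpa using integral_mul_comp_add_gaussianReal hφ hv t

namespace SteinIdentity

variable {Ω Ω' : Type*} [MeasurableSpace Ω] [MeasurableSpace Ω'] {μ : Measure Ω} {ν : Measure Ω'}
  {G X : Ω → ℝ} {H Y : Ω' → ℝ} {a b : ℝ} {i j : ℕ} {v w : ℝ≥0}

theorem const_one_const_zero [IsProbabilityMeasure μ] :
    SteinIdentity μ (fun _ => 1) (fun _ => 0) 1 0 0 where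
  weight_moments := .const 1
  moments := .const 0
  integral_eq _ t := by simp [gsmooth_zero]

theorem comp_measurableEquiv (h : SteinIdentity μ G X a j v) {T : Ω' ≃ᵐ Ω}
    (hT : MeasurePreserving T ν μ) :
    SteinIdentity ν (fun ω => G (T ω)) (fun ω => X (T ω)) a j v where
  weight_moments := h.weight_moments.comp_measurePreserving hT
  moments := h.moments.comp_measurePreserving hT
  integral_eq {φ} hφ t := by
    rw [← h.integral_eq hφ, ← hT.integral_comp']

theorem prod [IsProbabilityMeasure μ] [IsProbabilityMeasure ν] (h : SteinIdentity μ G X a j v)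
    (h' : SteinIdentity ν H Y b i w) (hv : v ≠ 0) :
    SteinIdentity (μ.prod ν) (fun p => G p.1 * H p.2) (fun p => X p.1 + Y p.2) (a * b) (j + i)
      (v + w) := by
  have hG := h.weight_moments.comp_measurePreserving (measurePreserving_fst (ν := ν))
  have hX := h.moments.comp_measurePreserving (measurePreserving_fst (ν := ν))
  have hH := h'.weight_moments.comp_measurePreserving (measurePreserving_snd (μ := μ))
  have hY := h'.moments.comp_measurePreserving (measurePreserving_snd (μ := μ))
  refine ⟨hG.mul hH, hX.add hY, fun {φ} hφ t => ?_⟩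
  have hψ := measurablePolyBounded_iteratedDeriv_gsmooth hφ hv j
  have hinner (ω' : Ω') : ∫ ω, G ω * H ω' * φ (X ω + Y ω' + t) ∂μ =
      a * (H ω' * iteratedDeriv j (gsmooth φ v) (Y ω' + t)) := by
    rw [mul_left_comm, ← h.integral_eq hφ, ← integral_const_mul]
    simp only [mul_assoc, mul_left_comm, add_assoc]
  calc ∫ p, G p.1 * H p.2 * φ (X p.1 + Y p.2 + t) ∂μ.prod ν
      = ∫ ω', ∫ ω, G ω * H ω' * φ (X ω + Y ω' + t) ∂μ ∂ν :=
        integral_prod_symm _ ((hG.mul hH).mul ((hX.add hY).comp_add_const hφ t)).integrable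
    _ = a * (b * iteratedDeriv i (gsmooth (iteratedDeriv j (gsmooth φ v)) w) t) := by
        simp only [hinner, integral_const_mul, h'.integral_eq hψ]
    _ = a * b * iteratedDeriv (j + i) (gsmooth φ ↑(v + w)) t := by
        rw [gsmooth_iteratedDeriv_gsmooth hφ hv, add_comm j i, mul_assoc]
        simp only [iteratedDeriv_eq_iterate, Function.iterate_add_apply]

theorem pi {n : ℕ} {Ω : Fin n → Type*} [∀ i, MeasurableSpace (Ω i)] {μ : ∀ i, Measure (Ω i)}
    [∀ i, IsProbabilityMeasure (μ i)] {G X : ∀ i, Ω i → ℝ} {a : Fin n → ℝ} {j : Fin n → ℕ}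
    {v : Fin n → ℝ≥0} (h : ∀ i, SteinIdentity (μ i) (G i) (X i) (a i) (j i) (v i))
    (hv : ∀ i, v i ≠ 0) :
    SteinIdentity (Measure.pi μ) (fun w => ∏ i, G i (w i)) (fun w => ∑ i, X i (w i))
      (∏ i, a i) (∑ i, j i) (∑ i, v i) := by
  induction n with
  | zero => simpa using const_one_const_zero
  | succ n ih =>
    have hsplit := (h 0).prod (ih (fun i => h i.succ) fun i => hv i.succ) (hv 0)
    simp only [Fin.prod_univ_succ, Fin.sum_univ_succ]
    exact hsplit.comp_measurableEquiv (measurePreserving_piFinSuccAbove μ 0)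

end SteinIdentity

/-! ### Alignment at initialization -/

section Alignment

variable {n : ℕ}

theorem bsign_mul_self (b : Bool) : bsign b * bsign b = 1 := by
  cases b <;> simp [bsign]

theorem chi_mul_self (S : Finset (Fin n)) (x : Fin n → Bool) : chi S x * chi S x = 1 := by
  simp only [chi, ← prod_mul_distrib, bsign_mul_self, prod_const_one]

theorem fourierCoef_chi_self (S : Finset (Fin n)) : fourierCoef n (chi S) S = 1 := by
  simp [fourierCoef, bExp, chi_mul_self]

/-- The correlation `E_x [f(x) σ(wᵀx + b)]` of `f` with the neuron `θ = (w, b)`. -/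
def neuronCorrelation (f : (Fin n → Bool) → ℝ) (σ : ℝ → ℝ) (θ : (Fin n → ℝ) × ℝ) : ℝ :=
  bExp n fun x => f x * σ (∑ i, θ.1 i * bsign (x i) + θ.2)

/-- The monomial `b^e ∏_{i ∈ S} w_i` in the parameters, against which the correlation of a neuron
is tested; the exponent `e ∈ {0, 1}` selects the parity of its degree. -/
def testMonomial (S : Finset (Fin n)) (e : ℕ) (θ : (Fin n → ℝ) × ℝ) : ℝ :=
  (∏ i ∈ S, θ.1 i) * θ.2 ^ e

/-- The action of the sign vector `x` on the weights; the bias is fixed. -/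
def signFlip (x : Fin n → Bool) (θ : (Fin n → ℝ) × ℝ) : (Fin n → ℝ) × ℝ :=
  (fun i => θ.1 i * bsign (x i), θ.2)

theorem testMonomial_signFlip (S : Finset (Fin n)) (e : ℕ) (x : Fin n → Bool)
    (θ : (Fin n → ℝ) × ℝ) : testMonomial S e (signFlip x θ) = chi S x * testMonomial S e θ := by
  simp only [testMonomial, signFlip, chi, prod_mul_distrib]
  ring

instance isProbabilityMeasure_initMeasure (n : ℕ) : IsProbabilityMeasure (initMeasure n) := by
  unfold initMeasure
  infer_instance

theorem measurePreserving_signFlip (x : Fin n → Bool) :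
    MeasurePreserving (signFlip x) (initMeasure n) (initMeasure n) := by
  have hcoord (i : Fin n) : MeasurePreserving (fun y => y * bsign (x i))
      (gaussianReal 0 (n : ℝ≥0)⁻¹) (gaussianReal 0 (n : ℝ≥0)⁻¹) := by
    refine ⟨by fun_prop, ?_⟩
    cases x i <;> simp [bsign, gaussianReal_map_neg]
  exact (measurePreserving_pi _ _ hcoord).prod (.id _)

theorem steinIdentity_initMeasure (hn : n ≠ 0) (S : Finset (Fin n)) {e : ℕ} (he : e ≤ 1) :
    SteinIdentity (initMeasure n) (testMonomial S e) (fun θ => ∑ i, θ.1 i + θ.2)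
      ((n : ℝ)⁻¹ ^ (S.card + e)) (S.card + e) (1 + (n : ℝ≥0)⁻¹) := by
  have hvar : (n : ℝ≥0)⁻¹ ≠ 0 := inv_ne_zero (Nat.cast_ne_zero.2 hn)
  have hweights := SteinIdentity.pi
    (fun i => steinIdentity_gaussianReal hvar (e := if i ∈ S then 1 else 0) (by split <;> simp))
    fun _ => hvar
  have htotal : ∑ _i : Fin n, (n : ℝ≥0)⁻¹ = 1 := by
    simp [mul_inv_cancel₀ (Nat.cast_ne_zero.2 hn : (n : ℝ≥0) ≠ 0)]
  simp only [pow_ite, pow_one, pow_zero, prod_ite_mem, univ_inter, sum_boole, htotal,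
    prod_const, filter_mem_eq_inter, NNReal.coe_inv, NNReal.coe_natCast, Nat.cast_id] at hweights
  have hneuron := hweights.prod (steinIdentity_gaussianReal hvar he) one_ne_zero
  rw [pow_add]
  simp only [NNReal.coe_inv, NNReal.coe_natCast] at hneuron
  exact hneuron

theorem integral_pow_sq_gaussianReal (v : ℝ≥0) {e : ℕ} (he : e ≤ 1) :
    ∫ y, (y ^ e) ^ 2 ∂gaussianReal 0 v = (v : ℝ) ^ e := by
  interval_cases e
  · simp
  · have hvar := variance_of_integral_eq_zero (μ := gaussianReal 0 v) aemeasurable_id'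
      integral_id_gaussianReal
    simpa [variance_fun_id_gaussianReal] using hvar.symm

theorem integral_testMonomial_sq (S : Finset (Fin n)) {e : ℕ} (he : e ≤ 1) :
    ∫ θ, testMonomial S e θ ^ 2 ∂initMeasure n = (n : ℝ)⁻¹ ^ (S.card + e) := by
  have hweights : ∫ w : Fin n → ℝ, (∏ i ∈ S, w i) ^ 2
      ∂Measure.pi (fun _ => gaussianReal 0 (n : ℝ≥0)⁻¹) = (n : ℝ)⁻¹ ^ S.card := by
    have hfactor (w : Fin n → ℝ) :
        (∏ i ∈ S, w i) ^ 2 = ∏ i, (w i ^ (if i ∈ S then 1 else 0)) ^ 2 := by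
      simp [pow_ite, prod_pow, prod_ite_mem]
    simp only [hfactor]
    rw [integral_fintype_prod_eq_prod fun i y => (y ^ (if i ∈ S then 1 else 0)) ^ 2,
      prod_congr rfl fun i _ => integral_pow_sq_gaussianReal _ (by split <;> simp)]
    simp [pow_ite, prod_ite_mem]
  simp only [testMonomial, mul_pow, initMeasure]
  rw [integral_prod_mul (fun w : Fin n → ℝ => (∏ i ∈ S, w i) ^ 2) fun y => (y ^ e) ^ 2,
    hweights, integral_pow_sq_gaussianReal _ he, pow_add]
  simp

theorem hasAllMoments_preactivation (x : Fin n → Bool) :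
    HasAllMoments (fun θ => ∑ i, θ.1 i * bsign (x i) + θ.2) (initMeasure n) := by
  have hcoord := hasAllMoments_gaussianReal 0 (n : ℝ≥0)⁻¹
  refine (HasAllMoments.finset_sum fun i _ => ?_).add
    (hcoord.comp_measurePreserving measurePreserving_snd)
  exact (hcoord.comp_measurePreserving
    ((measurePreserving_eval _ i).comp measurePreserving_fst)).mul (.const _)

variable {σ : ℝ → ℝ}

theorem hasAllMoments_neuronCorrelation (f : (Fin n → Bool) → ℝ) (hσ : MeasurablePolyBounded σ) :
    HasAllMoments (neuronCorrelation f σ) (initMeasure n) := by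
  unfold neuronCorrelation bExp
  simp only [div_eq_mul_inv]
  exact (HasAllMoments.finset_sum fun x _ =>
    (HasAllMoments.const (f x)).mul ((hasAllMoments_preactivation x).comp hσ)).mul (.const _)

/-- The symmetry of the weights under sign flips moves the dependence on `x` into the character. -/
theorem integral_comp_preactivation_mul_testMonomial (hn : n ≠ 0) (hσ : MeasurablePolyBounded σ)
    (S : Finset (Fin n)) {e : ℕ} (he : e ≤ 1) (x : Fin n → Bool) :
    ∫ θ, σ (∑ i, θ.1 i * bsign (x i) + θ.2) * testMonomial S e θ ∂initMeasure n =
      chi S x * ((n : ℝ)⁻¹ ^ (S.card + e) *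
        iteratedDeriv (S.card + e) (gsmooth σ ↑(1 + (n : ℝ≥0)⁻¹)) 0) := by
  have hstein := steinIdentity_initMeasure hn S he
  have hmeas := (hstein.weight_moments.mul (hstein.moments.comp hσ)).integrable.aestronglyMeasurable
  have hflip := measurePreserving_signFlip x
  calc ∫ θ, σ (∑ i, θ.1 i * bsign (x i) + θ.2) * testMonomial S e θ ∂initMeasure n
      = ∫ θ, chi S x * (testMonomial S e (signFlip x θ) *
          σ (∑ i, (signFlip x θ).1 i + (signFlip x θ).2)) ∂initMeasure n := by
        simp only [testMonomial_signFlip, ← mul_assoc, chi_mul_self, one_mul]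
        simp only [signFlip, mul_comm]
    _ = chi S x * ∫ θ, testMonomial S e θ * σ (∑ i, θ.1 i + θ.2) ∂initMeasure n := by
        rw [integral_const_mul]
        congr 1
        conv_rhs => rw [← hflip.map_eq]
        exact (integral_map hflip.aemeasurable (by rwa [hflip.map_eq])).symm
    _ = _ := by simpa only [add_zero] using congrArg (chi S x * ·) (hstein.integral_eq hσ 0)

theorem integral_neuronCorrelation_mul_testMonomial (hn : n ≠ 0) (f : (Fin n → Bool) → ℝ)
    (hσ : MeasurablePolyBounded σ) (S : Finset (Fin n)) {e : ℕ} (he : e ≤ 1) :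
    ∫ θ, neuronCorrelation f σ θ * testMonomial S e θ ∂initMeasure n =
      fourierCoef n f S * ((n : ℝ)⁻¹ ^ (S.card + e) *
        iteratedDeriv (S.card + e) (gsmooth σ ↑(1 + (n : ℝ≥0)⁻¹)) 0) := by
  have hint (x : Fin n → Bool) : Integrable
      (fun θ => f x * (σ (∑ i, θ.1 i * bsign (x i) + θ.2) * testMonomial S e θ))
      (initMeasure n) :=
    (((hasAllMoments_preactivation x).comp hσ).mul
      (steinIdentity_initMeasure hn S he).weight_moments).integrable.const_mul _
  simp only [neuronCorrelation, fourierCoef, bExp, div_mul_eq_mul_div, sum_mul, integral_div,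
    mul_assoc]
  rw [integral_finsetSum _ fun x _ => hint x]
  simp only [integral_const_mul, integral_comp_preactivation_mul_testMonomial hn hσ S he]

theorem fourierCoef_sq_mul_le_INAL (hn : n ≠ 0) (f : (Fin n → Bool) → ℝ)
    (hσ : MeasurablePolyBounded σ) (S : Finset (Fin n)) {e : ℕ} (he : e ≤ 1) :
    fourierCoef n f S ^ 2 * ((n : ℝ)⁻¹ ^ (S.card + e) *
      iteratedDeriv (S.card + e) (gsmooth σ ↑(1 + (n : ℝ≥0)⁻¹)) 0 ^ 2) ≤ INAL n f σ := by
  have hcauchy := sq_integral_mul_le_integral_sq_mul_integral_sq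
    (hasAllMoments_neuronCorrelation f hσ).memLp_two
    (steinIdentity_initMeasure hn S he).weight_moments.memLp_two
  rw [integral_neuronCorrelation_mul_testMonomial hn f hσ S he, integral_testMonomial_sq S he]
    at hcauchy
  have hscale : 0 < (n : ℝ)⁻¹ ^ (S.card + e) := by positivity
  refine le_of_mul_le_mul_right (le_trans (le_of_eq ?_) hcauchy) hscale
  ring

theorem inv_pow_mul_sq_le_INAL_monomial (hn : n ≠ 0) {k : ℕ} (hk : k ≤ n)
    (hσ : MeasurablePolyBounded σ) {e : ℕ} (he : e ≤ 1) :
    (n : ℝ)⁻¹ ^ (k + e) * iteratedDeriv (k + e) (gsmooth σ ↑(1 + (n : ℝ≥0)⁻¹)) 0 ^ 2 ≤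
      INAL n (monomial n k) σ := by
  have hcard : (univ.filter fun i : Fin n => (i : ℕ) < k).card = k := by
    rw [Fin.card_filter_val_lt, min_eq_right hk]
  have hbound := fourierCoef_sq_mul_le_INAL hn (monomial n k) hσ
    (univ.filter fun i : Fin n => (i : ℕ) < k) he
  have hcoef : fourierCoef n (monomial n k) (univ.filter fun i : Fin n => (i : ℕ) < k) = 1 :=
    fourierCoef_chi_self _
  rwa [hcoef, hcard, one_pow, one_mul] at hbound

end Alignment

theorem isBigO_INAL_monomial {σ : ℝ → ℝ} (hσ : MeasurablePolyBounded σ) {k e : ℕ} (he : e ≤ 1)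
    (hderiv : iteratedDeriv (k + e) (gsmooth σ 1) 0 ≠ 0) :
    (fun n : ℕ => ((n : ℝ) ^ (k + e))⁻¹) =O[atTop] fun n : ℕ => INAL n (monomial n k) σ := by
  have hvar : Tendsto (fun n : ℕ => (n : ℝ≥0)⁻¹) atTop (nhds 0) :=
    tendsto_inv_atTop_nhds_zero_nat
  have hlim := ((tendsto_iteratedDeriv_gsmooth_add hσ one_ne_zero (k + e) 0).comp hvar).pow 2
  rw [NNReal.coe_one] at hlim
  have hlimit : 0 < iteratedDeriv (k + e) (gsmooth σ 1) 0 ^ 2 := by positivity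
  refine .of_bound (iteratedDeriv (k + e) (gsmooth σ 1) 0 ^ 2 / 2)⁻¹ ?_
  filter_upwards [hlim.eventually_const_le (half_lt_self hlimit), eventually_ge_atTop k,
    eventually_ne_atTop 0] with n hlarge hk hn
  rw [le_inv_mul_iff₀ (half_pos hlimit), ← inv_pow, Real.norm_of_nonneg (by positivity), mul_comm]
  calc (n : ℝ)⁻¹ ^ (k + e) * (iteratedDeriv (k + e) (gsmooth σ 1) 0 ^ 2 / 2)
      ≤ (n : ℝ)⁻¹ ^ (k + e) * iteratedDeriv (k + e) (gsmooth σ ↑(1 + (n : ℝ≥0)⁻¹)) 0 ^ 2 := by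
        gcongr
        exact hlarge
    _ ≤ INAL n (monomial n k) σ := inv_pow_mul_sq_le_INAL_monomial hn hk hσ he
    _ ≤ ‖INAL n (monomial n k) σ‖ := Real.le_norm_self _

theorem expressive_is_one_strongly_correlating_general {σ : ℝ → ℝ} (hσ : MeasurablePolyBounded σ)
    {k : ℕ} (hderiv : iteratedDeriv k (gsmooth σ 1) 0 ≠ 0 ∨
      iteratedDeriv (k + 1) (gsmooth σ 1) 0 ≠ 0) :
    (fun n : ℕ => ((n : ℝ) ^ (k + 1))⁻¹) =O[atTop] fun n : ℕ => INAL n (monomial n k) σ := by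
  rcases hderiv with hk | hk_succ
  · have hweaker : (fun n : ℕ => ((n : ℝ) ^ (k + 1))⁻¹) =O[atTop]
        fun n : ℕ => ((n : ℝ) ^ k)⁻¹ := by
      refine .of_bound' ?_
      filter_upwards [eventually_ge_atTop 1] with n hn
      have hn' : (1 : ℝ) ≤ n := by exact_mod_cast hn
      rw [norm_inv, norm_inv, norm_pow, norm_pow, Real.norm_natCast]
      gcongr
      exact k.le_succ
    exact hweaker.trans (isBigO_INAL_monomial (e := 0) hσ zero_le_one hk)
  · exact isBigO_INAL_monomial hσ le_rfl hk_succ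

/-- Every expressive activation is 1-strongly correlating: for every fixed `k`,
`INAL(M_k, σ) = Ω(n^{-(k+1)})` as `n → ∞`. -/
theorem expressive_is_one_strongly_correlating
    (σ : ℝ → ℝ) (hσ : Expressive σ) (k : ℕ) :
    (fun n : ℕ => ((n : ℝ) ^ (k + 1))⁻¹) =O[atTop]
      fun n : ℕ => INAL n (monomial n k) σ :=
  expressive_is_one_strongly_correlating_general ⟨hσ.1, hσ.2.1⟩ (hσ.2.2 k)
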